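/- arXiv:2111.07701 — 2 statements merged into one kernel-verified Lean document; each statement's English description precedes it below -/
import Mathlib

section
/- Let n ≥ 1 and d ≥ 1 be integers and M > 0 a real number. Let φ : ℝⁿ → ℝ be continuous with 0 ≤ φ(x) ≤ C₀·(1 + ‖x‖₂^{d−1}) for some constant C₀ ≥ 0 and all x in the nonnegative orthant ℝⁿ₊, and let g₁, …, g_m : ℝⁿ → ℝ be continuous functions with |g_i(x)| ≤ C_i·(1 + ‖x‖₂^{d−1}) on ℝⁿ₊ for constants C_i ≥ 0, and let q₁, …, q_m ∈ ℝ. Let F be the set of Borel probability measures μ on ℝⁿ that are supported in ℝⁿ₊ and satisfy ∫ g_i dμ = q_i for all i ∈ {1,…,m} and ∫ ‖x‖₂^d dμ ≤ M. If F is nonempty, then sup { ∫ φ dμ : μ ∈ F } is finite and there exists μ* ∈ F with ∫ φ dμ* = sup { ∫ φ dμ : μ ∈ F }, i.e. the supremum is attained. -/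
open MeasureTheory

open Asymptotics Filter Set Topology
open scoped BoundedContinuousFunction ENNReal NNReal

/-!
By Prokhorov's theorem, probability measures on a closed set with bounded `w`-moment form a weakly
compact set whenever `w` is continuous, nonnegative and coercive: Markov's inequality gives
tightness, and the portmanteau theorem with lower semicontinuity of the moment gives closedness.
A continuous integrand `f = o(w)` differs from a clipped, hence bounded, copy of itself by at most
`ε * w`, so `μ ↦ ∫ f ∂μ` is a uniform limit of weakly continuous maps on that set. The
constraints therefore cut out a compact set, on which the continuous objective attains its maximum.
-/

section Asymptotics

theorem exists_boundedContinuousFunction_abs_sub_le_of_isLittleO {X : Type*} [TopologicalSpace X]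
    {S : Set X} {f w : X → ℝ} (hfc : Continuous f) (hw0 : 0 ≤ w)
    (hfw : f =o[cocompact X ⊓ 𝓟 S] w) {ε : ℝ} (hε : 0 < ε) :
    ∃ b : X →ᵇ ℝ, ∀ x ∈ S, |f x - b x| ≤ ε * w x := by
  obtain ⟨Q, hQ, hsmall⟩ := mem_cocompact.1 (eventually_inf_principal.1 (hfw.def hε))
  obtain ⟨N, hN⟩ := hQ.exists_bound_of_continuousOn hfc.continuousOn
  let clipped : X →ᵇ ℝ := .ofNormedAddCommGroup (fun x => max (-|N|) (min |N| (f x)))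
    (by fun_prop) |N| fun x => abs_le.2
      ⟨le_max_left _ _, max_le (neg_le_self (abs_nonneg N)) (min_le_left _ _)⟩
  refine ⟨clipped, fun x hxS => ?_⟩
  change |f x - max (-|N|) (min |N| (f x))| ≤ ε * w x
  by_cases hxQ : x ∈ Q
  · obtain ⟨hlo, hhi⟩ := abs_le.1 ((hN x hxQ).trans (le_abs_self N))
    rw [min_eq_right hhi, max_eq_right hlo, sub_self, abs_zero]
    exact mul_nonneg hε.le (hw0 x)
  · have hclip : |f x - max (-|N|) (min |N| (f x))| ≤ |f x| := by grind
    have hfx : ‖f x‖ ≤ ε * ‖w x‖ := hsmall hxQ hxS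
    rw [Real.norm_of_nonneg (hw0 x)] at hfx
    exact hclip.trans hfx

variable {E : Type*} [SeminormedAddCommGroup E] [ProperSpace E]

theorem isLittleO_norm_pow_of_abs_le {S : Set E} {f : E → ℝ} {C : ℝ} {k d : ℕ} (hkd : k < d)
    (hf : ∀ x ∈ S, |f x| ≤ C * (1 + ‖x‖ ^ k)) :
    f =o[cocompact E ⊓ 𝓟 S] fun x => ‖x‖ ^ d := by
  have hbigO : f =O[cocompact E ⊓ 𝓟 S] fun x => 1 + ‖x‖ ^ k :=
    .of_bound C <| eventually_inf_principal.2 <| .of_forall fun x hx => by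
      rw [Real.norm_of_nonneg (by positivity : 0 ≤ 1 + ‖x‖ ^ k)]
      exact hf x hx
  have hlittleO : (fun t : ℝ => 1 + t ^ k) =o[atTop] fun t => t ^ d := by
    simpa only [pow_zero] using (isLittleO_pow_pow_atTop_of_lt (Nat.zero_lt_of_lt hkd)).add
      (isLittleO_pow_pow_atTop_of_lt hkd)
  exact hbigO.trans_isLittleO
    ((hlittleO.comp_tendsto (tendsto_norm_cocompact_atTop (E := E))).mono inf_le_left)

theorem tendsto_norm_pow_cocompact_atTop {d : ℕ} (hd : d ≠ 0) :
    Tendsto (fun x : E => ‖x‖ ^ d) (cocompact E) atTop :=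
  (tendsto_pow_atTop hd).comp tendsto_norm_cocompact_atTop

end Asymptotics

section MomentProblem

variable {X : Type*} [MeasurableSpace X]

theorem iSup_min_natCast (a : ℝ≥0) : ⨆ N : ℕ, ((min a N : ℝ≥0) : ℝ≥0∞) = a := by
  refine le_antisymm (iSup_le fun N => ENNReal.coe_le_coe.2 (min_le_left _ _)) ?_
  obtain ⟨N, hN⟩ := exists_nat_ge a
  exact le_iSup_of_le N (by rw [min_eq_left hN])

theorem lintegral_eq_iSup_lintegral_min {f : X → ℝ≥0} (hf : Measurable f) (μ : Measure X) :
    ∫⁻ x, f x ∂μ = ⨆ N : ℕ, ∫⁻ x, (min (f x) N : ℝ≥0) ∂μ := by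
  rw [← lintegral_iSup]
  · simp only [iSup_min_natCast]
  · exact fun N => (hf.min measurable_const).coe_nnreal_ennreal
  · exact fun N N' hN x => ENNReal.coe_le_coe.2 (min_le_min le_rfl (Nat.cast_le.2 hN))

theorem integrable_and_integral_le_iff_lintegral_le {μ : Measure X} {w : X → ℝ}
    (hwm : AEStronglyMeasurable w μ) (hw0 : 0 ≤ᵐ[μ] w) {M : ℝ} :
    Integrable w μ ∧ ∫ x, w x ∂μ ≤ M ↔
      0 ≤ M ∧ ∫⁻ x, ENNReal.ofReal (w x) ∂μ ≤ ENNReal.ofReal M := by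
  constructor
  · rintro ⟨hwi, hle⟩
    rw [← ofReal_integral_eq_lintegral_ofReal hwi hw0]
    exact ⟨(integral_nonneg_of_ae hw0).trans hle, ENNReal.ofReal_le_ofReal hle⟩
  · rintro ⟨hM, hle⟩
    have hwi : Integrable w μ :=
      ⟨hwm, (hasFiniteIntegral_iff_ofReal hw0).2 (hle.trans_lt ENNReal.ofReal_lt_top)⟩
    rw [← ofReal_integral_eq_lintegral_ofReal hwi hw0, ENNReal.ofReal_le_ofReal_iff hM] at hle
    exact ⟨hwi, hle⟩

variable [TopologicalSpace X]

theorem lowerSemicontinuous_measure_of_isOpen [OpensMeasurableSpace X] [HasOuterApproxClosed X]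
    {G : Set X} (hG : IsOpen G) :
    LowerSemicontinuous fun μ : ProbabilityMeasure X => (μ : Measure X) G :=
  lowerSemicontinuous_iff_le_liminf.2 fun _ =>
    ProbabilityMeasure.le_liminf_measure_open_of_tendsto tendsto_id hG

theorem lowerSemicontinuous_lintegral_of_continuous [OpensMeasurableSpace X] {f : X → ℝ≥0}
    (hf : Continuous f) :
    LowerSemicontinuous fun μ : ProbabilityMeasure X => ∫⁻ x, f x ∂(μ : Measure X) := by
  simp only [lintegral_eq_iSup_lintegral_min hf.measurable]
  refine lowerSemicontinuous_iSup fun N => Continuous.lowerSemicontinuous ?_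
  let clipped : X →ᵇ ℝ≥0 := .mkOfBound ⟨fun x => min (f x) N, by fun_prop⟩ (N - 0) fun x y =>
    Real.dist_le_of_mem_Icc ⟨NNReal.coe_nonneg _, NNReal.coe_le_coe.2 (min_le_right _ _)⟩
      ⟨NNReal.coe_nonneg _, NNReal.coe_le_coe.2 (min_le_right _ _)⟩
  exact ProbabilityMeasure.continuous_lintegral_boundedContinuousFunction clipped

/-- The probability measures carried by `S` whose `w`-moment `∫ w` is finite and at most `M`.
Integrability is required separately since the Bochner integral of a non-integrable function
is `0`. -/
def momentBoundedMeasures (S : Set X) (w : X → ℝ) (M : ℝ) : Set (ProbabilityMeasure X) :=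
  {μ | (μ : Measure X) Sᶜ = 0 ∧ Integrable w (μ : Measure X) ∧ ∫ x, w x ∂(μ : Measure X) ≤ M}

/-- The feasible set of the generalized moment problem: the Borel probability measures carried by
`S` with `w`-moment at most `M` and prescribed moments `∫ g i = q i`. -/
def gmpFeasibleMeasures {ι : Type*} (S : Set X) (w : X → ℝ) (M : ℝ) (g : ι → X → ℝ) (q : ι → ℝ) :
    Set (Measure X) :=
  {μ | IsProbabilityMeasure μ ∧ μ Sᶜ = 0 ∧ (∀ i, Integrable (g i) μ ∧ ∫ x, g i x ∂μ = q i) ∧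
    Integrable w μ ∧ ∫ x, w x ∂μ ≤ M}

variable {S : Set X} {f w : X → ℝ} {M : ℝ} {ι : Type*} {g : ι → X → ℝ}

theorem isClosed_momentBoundedMeasures [OpensMeasurableSpace X] [HasOuterApproxClosed X]
    (hS : IsClosed S) (hwc : Continuous w) (hw0 : 0 ≤ w) :
    IsClosed (momentBoundedMeasures S w M) := by
  simp only [momentBoundedMeasures, integrable_and_integral_le_iff_lintegral_le
    hwc.measurable.aestronglyMeasurable (ae_of_all _ hw0), ← nonpos_iff_eq_zero]
  have hsupport := (lowerSemicontinuous_measure_of_isOpen hS.isOpen_compl).isClosed_preimage 0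
  have hmoment := (lowerSemicontinuous_lintegral_of_continuous
    (continuous_real_toNNReal.comp hwc)).isClosed_preimage (ENNReal.ofReal M)
  exact hsupport.inter (isClosed_const.inter hmoment)

theorem isTightMeasureSet_momentBoundedMeasures
    (hw0 : 0 ≤ w) (hw : Tendsto w (cocompact X) atTop) :
    IsTightMeasureSet {(μ : Measure X) | μ ∈ momentBoundedMeasures S w M} := by
  rw [isTightMeasureSet_iff_exists_isCompact_measure_compl_le]
  intro ε hε
  have hlim : Tendsto (fun r : ℝ => ENNReal.ofReal M / ENNReal.ofReal r) atTop (𝓝 0) := by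
    simpa only [ENNReal.div_top] using
      ENNReal.Tendsto.const_div ENNReal.tendsto_ofReal_atTop (.inr ENNReal.ofReal_ne_top)
  obtain ⟨r, hrε, hr⟩ := ((hlim.eventually (ge_mem_nhds hε)).and (eventually_gt_atTop 0)).exists
  obtain ⟨Q, hQ, hQr⟩ := mem_cocompact.1 (hw.eventually_ge_atTop r)
  refine ⟨Q, hQ, ?_⟩
  rintro _ ⟨μ, ⟨-, hwi, hwM⟩, rfl⟩
  have hlint := ((integrable_and_integral_le_iff_lintegral_le hwi.aestronglyMeasurable
    (ae_of_all _ hw0)).1 ⟨hwi, hwM⟩).2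
  calc (μ : Measure X) Qᶜ
      ≤ (μ : Measure X) {x | ENNReal.ofReal r ≤ ENNReal.ofReal (w x)} :=
        measure_mono fun x hx => ENNReal.ofReal_le_ofReal (hQr hx)
    _ ≤ (∫⁻ x, ENNReal.ofReal (w x) ∂(μ : Measure X)) / ENNReal.ofReal r :=
        meas_ge_le_lintegral_div hwi.aemeasurable.ennreal_ofReal (ENNReal.ofReal_pos.2 hr).ne'
          ENNReal.ofReal_ne_top
    _ ≤ ENNReal.ofReal M / ENNReal.ofReal r := ENNReal.div_le_div_right hlint _
    _ ≤ ε := hrε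

theorem isCompact_momentBoundedMeasures [BorelSpace X] [T2Space X] [HasOuterApproxClosed X]
    (hS : IsClosed S) (hwc : Continuous w) (hw0 : 0 ≤ w) (hw : Tendsto w (cocompact X) atTop) :
    IsCompact (momentBoundedMeasures S w M) := by
  rw [← (isClosed_momentBoundedMeasures hS hwc hw0).closure_eq]
  exact isCompact_closure_of_isTightMeasureSet (isTightMeasureSet_momentBoundedMeasures hw0 hw)

theorem integrable_of_mem_momentBoundedMeasures [OpensMeasurableSpace X]
    (hfc : Continuous f) (hw0 : 0 ≤ w) (hfw : f =o[cocompact X ⊓ 𝓟 S] w)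
    {μ : ProbabilityMeasure X} (hμ : μ ∈ momentBoundedMeasures S w M) :
    Integrable f (μ : Measure X) := by
  obtain ⟨hS, hwi, -⟩ := hμ
  obtain ⟨b, hb⟩ := exists_boundedContinuousFunction_abs_sub_le_of_isLittleO hfc hw0 hfw one_pos
  have hsub : Integrable (fun x => f x - b x) (μ : Measure X) :=
    (hwi.const_mul 1).mono' (by fun_prop) (mem_of_superset (mem_ae_iff.2 hS) hb)
  exact (hsub.add (b.integrable _)).congr (.of_forall fun x => sub_add_cancel (f x) (b x))

theorem continuousOn_integral_momentBoundedMeasures [OpensMeasurableSpace X]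
    (hfc : Continuous f) (hw0 : 0 ≤ w) (hfw : f =o[cocompact X ⊓ 𝓟 S] w) :
    ContinuousOn (fun μ : ProbabilityMeasure X => ∫ x, f x ∂(μ : Measure X))
      (momentBoundedMeasures S w M) := by
  refine continuousOn_of_uniform_approx_of_continuousOn fun u hu => ?_
  obtain ⟨δ, hδ, hδu⟩ := Metric.mem_uniformity_dist.1 hu
  obtain ⟨ε, hε, hεM⟩ : ∃ ε > 0, ε * M < δ :=
    ⟨δ / (|M| + 1), by positivity, by
      rw [div_mul_eq_mul_div, div_lt_iff₀ (by positivity)]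
      exact mul_lt_mul_of_pos_left ((le_abs_self M).trans_lt (lt_add_one _)) hδ⟩
  obtain ⟨b, hb⟩ := exists_boundedContinuousFunction_abs_sub_le_of_isLittleO hfc hw0 hfw hε
  refine ⟨fun μ => ∫ x, b x ∂(μ : Measure X),
    (ProbabilityMeasure.continuous_integral_boundedContinuousFunction b).continuousOn,
    fun μ hμ => hδu ?_⟩
  have hfi := integrable_of_mem_momentBoundedMeasures hfc hw0 hfw hμ
  obtain ⟨hS, hwi, hwM⟩ := hμ
  calc dist (∫ x, f x ∂(μ : Measure X)) (∫ x, b x ∂(μ : Measure X))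
      = ‖∫ x, (f x - b x) ∂(μ : Measure X)‖ := by
        rw [dist_eq_norm, integral_sub hfi (b.integrable _)]
    _ ≤ ∫ x, ε * w x ∂(μ : Measure X) :=
        norm_integral_le_of_norm_le (hwi.const_mul ε) (mem_of_superset (mem_ae_iff.2 hS) hb)
    _ = ε * ∫ x, w x ∂(μ : Measure X) := integral_const_mul _ _
    _ ≤ ε * M := mul_le_mul_of_nonneg_left hwM hε.le
    _ < δ := hεM

theorem gmpFeasibleMeasures_eq_image [OpensMeasurableSpace X]
    (hgc : ∀ i, Continuous (g i)) (hw0 : 0 ≤ w) (hgw : ∀ i, g i =o[cocompact X ⊓ 𝓟 S] w)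
    (q : ι → ℝ) :
    gmpFeasibleMeasures S w M g q = (fun μ : ProbabilityMeasure X => (μ : Measure X)) ''
      (momentBoundedMeasures S w M ∩ (fun μ i => ∫ x, g i x ∂(μ : Measure X)) ⁻¹' {q}) := by
  ext μ
  constructor
  · rintro ⟨hprob, hS, hgq, hwM⟩
    exact ⟨⟨μ, hprob⟩, ⟨⟨hS, hwM⟩, funext fun i => (hgq i).2⟩, rfl⟩
  · rintro ⟨μ, ⟨hμ, hgq⟩, rfl⟩
    exact ⟨μ.2, hμ.1, fun i => ⟨integrable_of_mem_momentBoundedMeasures (hgc i) hw0 (hgw i) hμ,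
      congrFun hgq i⟩, hμ.2⟩

theorem isCompact_momentBoundedMeasures_inter_moments [BorelSpace X] [T2Space X]
    [HasOuterApproxClosed X] (hS : IsClosed S) (hwc : Continuous w) (hw0 : 0 ≤ w)
    (hw : Tendsto w (cocompact X) atTop) (hgc : ∀ i, Continuous (g i))
    (hgw : ∀ i, g i =o[cocompact X ⊓ 𝓟 S] w) (q : ι → ℝ) :
    IsCompact (momentBoundedMeasures S w M ∩
      (fun μ i => ∫ x, g i x ∂(μ : Measure X)) ⁻¹' {q}) := by
  have hmoments := continuousOn_pi.2 fun i =>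
    continuousOn_integral_momentBoundedMeasures (M := M) (hgc i) hw0 (hgw i)
  exact (isCompact_momentBoundedMeasures hS hwc hw0 hw).of_isClosed_subset
    (hmoments.preimage_isClosed_of_isClosed (isClosed_momentBoundedMeasures hS hwc hw0)
      isClosed_singleton) inter_subset_left

theorem gmp_supremum_attained_general [BorelSpace X] [T2Space X] [HasOuterApproxClosed X]
    (hS : IsClosed S) (hwc : Continuous w) (hw0 : 0 ≤ w) (hw : Tendsto w (cocompact X) atTop)
    {φ : X → ℝ} (hφc : Continuous φ) (hφw : φ =o[cocompact X ⊓ 𝓟 S] w)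
    (hgc : ∀ i, Continuous (g i)) (hgw : ∀ i, g i =o[cocompact X ⊓ 𝓟 S] w) (q : ι → ℝ)
    (hne : (gmpFeasibleMeasures S w M g q).Nonempty) :
    BddAbove ((fun ν => ∫ x, φ x ∂ν) '' gmpFeasibleMeasures S w M g q) ∧
    ∃ μ ∈ gmpFeasibleMeasures S w M g q,
      ∫ x, φ x ∂μ = sSup ((fun ν => ∫ x, φ x ∂ν) '' gmpFeasibleMeasures S w M g q) := by
  have hfeasible := gmpFeasibleMeasures_eq_image (S := S) (M := M) hgc hw0 hgw q
  have hcompact := isCompact_momentBoundedMeasures_inter_moments (M := M) hS hwc hw0 hw hgc hgw q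
  rw [hfeasible, image_nonempty] at hne
  obtain ⟨μ, hμ, hmax⟩ := hcompact.exists_isMaxOn hne
    ((continuousOn_integral_momentBoundedMeasures hφc hw0 hφw).mono inter_subset_left)
  have hgreatest : IsGreatest ((fun ν => ∫ x, φ x ∂ν) '' gmpFeasibleMeasures S w M g q)
      (∫ x, φ x ∂(μ : Measure X)) := by
    rw [hfeasible, image_image]
    exact ⟨mem_image_of_mem _ hμ, forall_mem_image.2 hmax⟩
  exact ⟨⟨_, hgreatest.2⟩, μ, hfeasible ▸ mem_image_of_mem _ hμ, hgreatest.csSup_eq.symm⟩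

end MomentProblem

theorem isClosed_nonneg_orthant (ι : Type*) :
    IsClosed {x : EuclideanSpace ℝ ι | ∀ i, 0 ≤ x i} :=
  isClosed_Ici.preimage (PiLp.continuous_ofLp 2 fun _ : ι => ℝ)

/-- Maximization half of Lemma 3: the supremum of the option-pricing GMP is finite and attained. -/
theorem gmp_supremum_attained
    (n d : ℕ) (hn : 1 ≤ n) (hd : 1 ≤ d) (M : ℝ) (hM : 0 < M)
    (φ : EuclideanSpace ℝ (Fin n) → ℝ) (hφc : Continuous φ)
    (C₀ : ℝ) (hC₀ : 0 ≤ C₀)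
    (hφ : ∀ x : EuclideanSpace ℝ (Fin n), (∀ i, 0 ≤ x i) →
        0 ≤ φ x ∧ φ x ≤ C₀ * (1 + ‖x‖ ^ (d - 1)))
    (m : ℕ) (g : Fin m → EuclideanSpace ℝ (Fin n) → ℝ) (hgc : ∀ i, Continuous (g i))
    (C : Fin m → ℝ) (hC : ∀ i, 0 ≤ C i)
    (hg : ∀ i, ∀ x : EuclideanSpace ℝ (Fin n), (∀ j, 0 ≤ x j) →
        |g i x| ≤ C i * (1 + ‖x‖ ^ (d - 1)))
    (q : Fin m → ℝ)
    (F : Set (Measure (EuclideanSpace ℝ (Fin n))))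
    (hF : F = {μ | IsProbabilityMeasure μ ∧
        μ {x | ¬ ∀ i, 0 ≤ x i} = 0 ∧
        (∀ i, Integrable (g i) μ ∧ ∫ x, g i x ∂μ = q i) ∧
        Integrable (fun x => ‖x‖ ^ d) μ ∧ ∫ x, ‖x‖ ^ d ∂μ ≤ M})
    (hne : F.Nonempty) :
    BddAbove ((fun ν => ∫ x, φ x ∂ν) '' F) ∧
    ∃ μ ∈ F, ∫ x, φ x ∂μ = sSup ((fun ν => ∫ x, φ x ∂ν) '' F) := by
  subst hF
  have hd' : d - 1 < d := Nat.sub_one_lt_of_lt hd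
  exact gmp_supremum_attained_general (isClosed_nonneg_orthant (Fin n))
    (continuous_norm.pow d) (fun x => pow_nonneg (norm_nonneg x) d)
    (tendsto_norm_pow_cocompact_atTop (Nat.one_le_iff_ne_zero.1 hd))
    hφc (isLittleO_norm_pow_of_abs_le hd' fun x hx =>
      (abs_of_nonneg (hφ x hx).1).trans_le (hφ x hx).2)
    hgc (fun i => isLittleO_norm_pow_of_abs_le hd' (hg i)) q hne
end

section
/- Let n ≥ 1, let Nᵢ ∈ ℕ and strikes k_{i,j} ≥ 0 with prices q_{i,j} ∈ ℝ for i ∈ [n], j ∈ [Nᵢ], let f₁,…,f_m be real polynomials in n variables with values p₁,…,p_m ∈ ℝ, let M > 0, let d be an even integer with d ≥ 1 + max of the degrees of the data, and let φ : ℝⁿ → ℝ be continuous with 0 ≤ φ(x) ≤ C₀·(1 + ‖x‖₂^{d−1}) on ℝⁿ₊. Let F be the set of Borel probability measures μ supported in ℝⁿ₊ satisfying ∫ max(0, x_i − k_{i,j}) dμ(x) = q_{i,j} for all i ∈ [n], j ∈ [Nᵢ], ∫ f_ℓ dμ = p_ℓ for all ℓ ∈ [m], and ∫ ‖x‖₂^d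 dμ ≤ M. If F is nonempty, then the infimum (respectively the supremum) of ∫ φ dμ over F is attained by a finitely atomic measure, i.e. by a measure of the form μ* = Σ_{j=1}^{N} ω_j δ_{x_j} with ω_j > 0, x_j ∈ ℝⁿ₊, and N ≤ n·(Σ_{i=1}^n Nᵢ) + m + 3. -/
open MeasureTheory

/-!
In finitely many dimensions the mean of an integrable vector lies in *every* convex set carrying the
vector, closed or not: if the mean lies outside, a supporting hyperplane there has almost surely
all the mass on it, and the dimension drops. With Carathéodory's theorem this is Richter's theorem:
finitely many integrals against a probability measure are matched by an atomic one.

Hence the values `∫ φ dμ` of feasible measures are already taken by feasible measures with a bounded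
number of atoms. Along an ultrafilter every weighted atom `w δ_x` converges or escapes to infinity;
in the second case the bound on `w V(x)` kills `w g(x)` for each `g = o(V)`. So the set of values is
compact, and Richter's theorem applied to an optimal measure bounds its number of atoms.
-/

open Filter Asymptotics
open scoped Topology

section Richter

theorem exists_dual_ne_zero_forall_le {E : Type*} [NormedAddCommGroup E] [NormedSpace ℝ E]
    [FiniteDimensional ℝ E] {s : Set E} (hs : Convex ℝ s) (hne : s.Nonempty) {v : E}
    (hv : v ∉ s) : ∃ f : E →L[ℝ] ℝ, f ≠ 0 ∧ ∀ y ∈ s, f y ≤ f v := by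
  by_cases hint : (interior s).Nonempty
  · exact geometric_hahn_banach_of_nonempty_interior_point hs (fun h => hv (interior_subset h)) hint
  obtain ⟨y₀, hy₀⟩ := hne
  have hdir : vectorSpan ℝ s ≠ ⊤ := fun h => hint <| by
    rw [← hs.convexHull_eq, interior_convexHull_nonempty_iff_affineSpan_eq_top]
    exact (AffineSubspace.affineSpan_eq_top_iff_vectorSpan_eq_top_of_nonempty ℝ E E ⟨y₀, hy₀⟩).2 h
  obtain ⟨f, hf₀, hf⟩ := Submodule.exists_le_ker_of_lt_top _ hdir.lt_top
  have hconst : ∀ y ∈ s, f y = f y₀ := fun y hy =>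
    sub_eq_zero.1 <| (map_sub f y y₀).symm.trans (hf (vsub_mem_vectorSpan ℝ hy hy₀))
  have hF₀ : f.toContinuousLinearMap ≠ 0 := by simpa using hf₀
  rcases le_total (f y₀) (f v) with h | h
  · exact ⟨f.toContinuousLinearMap, hF₀, fun y hy => by simpa [hconst y hy] using h⟩
  · exact ⟨-f.toContinuousLinearMap, neg_ne_zero.2 hF₀, fun y hy => by simpa [hconst y hy] using h⟩

variable {Ω : Type*} [MeasurableSpace Ω] {μ : Measure Ω} [IsProbabilityMeasure μ]
  {E : Type*} [NormedAddCommGroup E] [NormedSpace ℝ E]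

theorem ae_apply_eq_apply_integral_of_ae_le [CompleteSpace E] {G : Ω → E} (hG : Integrable G μ)
    {f : E →L[ℝ] ℝ} (hf : ∀ᵐ ω ∂μ, f (G ω) ≤ f (∫ ω', G ω' ∂μ)) :
    ∀ᵐ ω ∂μ, f (G ω) = f (∫ ω', G ω' ∂μ) := by
  refine (integral_eq_iff_of_ae_le (f.integrable_comp hG) (integrable_const _) hf).1 ?_
  simp [f.integral_comp_comm hG]

variable [FiniteDimensional ℝ E]

theorem integral_mem_of_convex {s : Set E} (hs : Convex ℝ s) {G : Ω → E}
    (hG : Integrable G μ) (hGs : ∀ᵐ ω ∂μ, G ω ∈ s) : ∫ ω, G ω ∂μ ∈ s := by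
  set v := ∫ ω, G ω ∂μ
  suffices ∀ W : Submodule ℝ E, (∀ᵐ ω ∂μ, G ω - v ∈ W) → v ∈ s from this ⊤ (by simp)
  intro W
  induction W using WellFoundedLT.induction with
  | ind W ih =>
  intro hW
  by_contra hvs
  let sW : Set W := {y | (y : E) + v ∈ s}
  have hsW : Convex ℝ sW := (hs.translate_preimage_left v).linear_preimage W.subtype
  have hsW_ne : sW.Nonempty := by
    obtain ⟨ω, hω, hωs⟩ := (hW.and hGs).exists
    exact ⟨⟨G ω - v, hω⟩, by simpa [sW] using hωs⟩
  obtain ⟨f, hf₀, hf⟩ := exists_dual_ne_zero_forall_le hsW hsW_ne (v := 0) (by simpa [sW] using hvs)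
  obtain ⟨g, hg⟩ := LinearMap.exists_extend (f : W →ₗ[ℝ] ℝ)
  have hgf : ∀ y : W, g y = f y := fun y => LinearMap.congr_fun hg y
  have hle : ∀ᵐ ω ∂μ, g (G ω) ≤ g v := by
    filter_upwards [hW, hGs] with ω hω hωs
    have h := hf ⟨G ω - v, hω⟩ (by simpa [sW] using hωs)
    rw [map_zero, ← hgf, map_sub] at h
    exact sub_nonpos.1 h
  have hker : ∀ᵐ ω ∂μ, G ω - v ∈ W ⊓ LinearMap.ker g := by
    filter_upwards [hW,
      ae_apply_eq_apply_integral_of_ae_le (f := g.toContinuousLinearMap) hG hle] with ω hω hgω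
    exact ⟨hω, by simpa [sub_eq_zero] using hgω⟩
  refine hvs (ih _ (inf_lt_left.2 fun hWg => hf₀ ?_) hker)
  ext y
  simpa [hgf] using hWg y.2

theorem exists_sum_smul_eq_integral {G : Ω → E} (hG : Integrable G μ) {K : Set Ω}
    (hK : ∀ᵐ ω ∂μ, ω ∈ K) :
    ∃ J ≤ Module.finrank ℝ E + 1, ∃ (w : Fin J → ℝ) (x : Fin J → Ω), (∀ j, 0 < w j) ∧
      (∀ j, x j ∈ K) ∧ ∑ j, w j = 1 ∧ ∑ j, w j • G (x j) = ∫ ω, G ω ∂μ := by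
  have hmem : ∫ ω, G ω ∂μ ∈ convexHull ℝ (G '' K) :=
    integral_mem_of_convex (convex_convexHull ℝ _) hG <|
      hK.mono fun ω hω => subset_convexHull ℝ _ ⟨ω, hω, rfl⟩
  obtain ⟨κ, _, z, w, hz, hind, hw, hw_sum, hwz⟩ := eq_pos_convex_span_of_mem_convexHull hmem
  choose x hxK hx using fun i => hz ⟨i, rfl⟩
  let e := (Fintype.equivFin κ).symm
  refine ⟨Fintype.card κ, hind.card_le_finrank_succ.trans (by gcongr; exact Submodule.finrank_le _),
    w ∘ e, x ∘ e, fun j => hw _, fun j => hxK _, ?_, ?_⟩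
  · rw [← hw_sum, ← e.sum_comp w]; rfl
  · rw [← hwz, ← e.sum_comp fun i => w i • z i]
    simp [hx]

end Richter

section Subordinate

/-- `g` is continuous on `K` and negligible against `V` at infinity in `K`: the test functions whose
integrals pass to the limit under a bound on `∫ V dμ`. -/
structure IsSubordinate {X : Type*} [TopologicalSpace X] (K : Set X) (V g : X → ℝ) : Prop where
  continuousOn : ContinuousOn g K
  isLittleO : g =o[cocompact X ⊓ 𝓟 K] V

variable {X : Type*} [TopologicalSpace X] {K : Set X} {V : X → ℝ}

theorem IsSubordinate.integrable [MeasurableSpace X] [OpensMeasurableSpace X] (hK : IsClosed K)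
    {g : X → ℝ} (hg : IsSubordinate K V g) {μ : Measure X} [IsFiniteMeasure μ]
    (hμK : ∀ᵐ x ∂μ, x ∈ K) (hV : Integrable V μ) : Integrable g μ := by
  have hbound := hg.isLittleO.bound one_pos
  rw [eventually_inf_principal, Filter.Eventually, mem_cocompact] at hbound
  obtain ⟨T, hT, hTbound⟩ := hbound
  obtain ⟨C, hC⟩ := (hT.inter_left hK).exists_bound_of_continuousOn
    (hg.continuousOn.mono Set.inter_subset_left)
  have hmeas : AEStronglyMeasurable g μ := by
    rw [← Measure.restrict_eq_self_of_ae_mem hμK]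
    exact hg.continuousOn.aestronglyMeasurable hK.measurableSet
  refine ((integrable_const |C|).add hV.norm).mono' hmeas ?_
  filter_upwards [hμK] with x hx
  by_cases hxT : x ∈ T
  · exact (hC x ⟨hx, hxT⟩).trans <|
      (le_abs_self C).trans (le_add_of_nonneg_right (norm_nonneg (V x)))
  · exact (by simpa using hTbound hxT hx : ‖g x‖ ≤ ‖V x‖).trans
      (le_add_of_nonneg_left (abs_nonneg C))

theorem tendsto_mul_zero_of_isLittleO {α : Type*} {l : Filter α} {w g V : α → ℝ} {M : ℝ}
    (hg : g =o[l] V) (hw : ∀ᶠ t in l, |w t * V t| ≤ M) :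
    Tendsto (fun t => w t * g t) l (𝓝 0) :=
  (isLittleO_one_iff ℝ).1 <| ((isBigO_refl w l).mul_isLittleO hg).trans_isBigO <|
    .of_bound M (by simpa using hw)

theorem exists_tendsto_ultrafilter_of_isCompact {Y α : Type*} [TopologicalSpace Y] {S : Set Y}
    (hS : IsCompact S) {U : Ultrafilter α} {u : α → Y} (hu : ∀ᶠ t in U, u t ∈ S) :
    ∃ a ∈ S, Tendsto u U (𝓝 a) :=
  hS.ultrafilter_le_nhds (U.map u) (le_principal_iff.2 hu)

theorem exists_tendsto_or_tendsto_cocompact {α : Type*} (hK : IsClosed K) (U : Ultrafilter α)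
    {x : α → X} (hx : ∀ᶠ t in U, x t ∈ K) :
    (∃ y ∈ K, Tendsto x U (𝓝[K] y)) ∨ Tendsto x U (cocompact X ⊓ 𝓟 K) := by
  by_cases h : ∃ T, IsCompact T ∧ ∀ᶠ t in U, x t ∈ T
  · obtain ⟨T, hT, hxT⟩ := h
    obtain ⟨y, hy, hxy⟩ := exists_tendsto_ultrafilter_of_isCompact (hT.inter_left hK) (hx.and hxT)
    exact .inl ⟨y, hy.1, tendsto_nhdsWithin_iff.2 ⟨hxy, hx⟩⟩
  · push Not at h
    exact .inr (tendsto_inf.2 ⟨hasBasis_cocompact.tendsto_right_iff.2 h, tendsto_principal.2 hx⟩)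

theorem exists_tendsto_weighted_atom {α : Type*} (hK : IsClosed K) (hV : ContinuousOn V K)
    (hV₀ : ∀ x ∈ K, 0 ≤ V x) {U : Ultrafilter α} {w : α → ℝ} {x : α → X} {M : ℝ}
    (hw : ∀ᶠ t in U, w t ∈ Set.Icc 0 1) (hx : ∀ᶠ t in U, x t ∈ K)
    (hM : ∀ᶠ t in U, w t * V (x t) ≤ M) :
    ∃ w' ≥ 0, ∃ x' ∈ K, ∃ l, w' * V x' ≤ l ∧ Tendsto (fun t => w t * V (x t)) U (𝓝 l) ∧
      ∀ g, IsSubordinate K V g → Tendsto (fun t => w t * g (x t)) U (𝓝 (w' * g x')) := by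
  have hwV : ∀ᶠ t in U, w t * V (x t) ∈ Set.Icc 0 M := by
    filter_upwards [hw, hx, hM] with t hwt hxt hMt using ⟨mul_nonneg hwt.1 (hV₀ _ hxt), hMt⟩
  rcases exists_tendsto_or_tendsto_cocompact hK U hx with ⟨x', hx', hlim⟩ | hlim
  · obtain ⟨w', hw', hwlim⟩ := exists_tendsto_ultrafilter_of_isCompact isCompact_Icc hw
    exact ⟨w', hw'.1, x', hx', w' * V x', le_rfl, hwlim.mul ((hV x' hx').tendsto.comp hlim),
      fun g hg => hwlim.mul ((hg.continuousOn x' hx').tendsto.comp hlim)⟩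
  · obtain ⟨l, hl, hVlim⟩ := exists_tendsto_ultrafilter_of_isCompact isCompact_Icc hwV
    obtain ⟨t₀, ht₀⟩ := hx.exists
    refine ⟨0, le_rfl, x t₀, ht₀, l, by simpa using hl.1, hVlim, fun g hg => ?_⟩
    rw [zero_mul]
    refine tendsto_mul_zero_of_isLittleO (M := M) (hg.isLittleO.comp_tendsto hlim) ?_
    filter_upwards [hwV] with t ht using (abs_of_nonneg ht.1).trans_le ht.2

theorem exists_tendsto_weighted_atoms {α κ : Type*} [Fintype κ] (hK : IsClosed K)
    (hV : ContinuousOn V K) (hV₀ : ∀ x ∈ K, 0 ≤ V x) {U : Ultrafilter α} {w : α → κ → ℝ}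
    {x : α → κ → X} {M : ℝ} (hw : ∀ᶠ t in U, w t ∈ stdSimplex ℝ κ)
    (hx : ∀ᶠ t in U, ∀ j, x t j ∈ K) (hM : ∀ᶠ t in U, ∑ j, w t j * V (x t j) ≤ M) :
    ∃ (w' : κ → ℝ) (x' : κ → X), (∀ j, 0 ≤ w' j) ∧ (∀ j, x' j ∈ K) ∧
      ∑ j, w' j * V (x' j) ≤ M ∧ ∀ g, IsSubordinate K V g →
        Tendsto (fun t => ∑ j, w t j * g (x t j)) U (𝓝 (∑ j, w' j * g (x' j))) := by
  have hMj : ∀ j, ∀ᶠ t in U, w t j * V (x t j) ≤ M := fun j => by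
    filter_upwards [hw, hx, hM] with t hwt hxt hMt
    exact (Finset.single_le_sum (f := fun j => w t j * V (x t j))
      (fun i _ => mul_nonneg (hwt.1 i) (hV₀ _ (hxt i))) (Finset.mem_univ j)).trans hMt
  choose w' hw' x' hx' l hl hVlim hlim using fun j =>
    exists_tendsto_weighted_atom (w := (w · j)) (x := (x · j)) hK hV hV₀
      (hw.mono fun t ht => mem_Icc_of_mem_stdSimplex ht j) (hx.mono fun t ht => ht j) (hMj j)
  refine ⟨w', x', hw', hx', ?_, fun g hg => tendsto_finsetSum _ fun j _ => hlim j g hg⟩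
  exact (Finset.sum_le_sum fun j _ => hl j).trans
    (le_of_tendsto (tendsto_finsetSum _ fun j _ => hVlim j) hM)

end Subordinate

section MomentProblem

variable {X : Type*} [MeasurableSpace X]

/-- The atomic measure `∑ⱼ wⱼ δ_{xⱼ}`; negative weights count as zero. -/
noncomputable def weightedDirac {κ : Type*} [Fintype κ] (w : κ → ℝ) (x : κ → X) : Measure X :=
  ∑ j, ENNReal.ofReal (w j) • Measure.dirac (x j)

/-- The measures with at most `B` atoms, all of them in `K`. -/
def atomicMeasures (K : Set X) (B : ℕ) : Set (Measure X) :=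
  {μ | ∃ (J : ℕ) (ω : Fin J → ℝ) (pts : Fin J → X),
    J ≤ B ∧ (∀ j, 0 < ω j) ∧ (∀ j, pts j ∈ K) ∧ μ = weightedDirac ω pts}

/-- The feasible set of the generalized moment problem: probability measures carried by `K` with
prescribed moments `∫ gᵢ dμ = bᵢ` and with `∫ V dμ ≤ M`. -/
def gmpFeasible {ι : Type*} (K : Set X) (g : ι → X → ℝ) (b : ι → ℝ) (V : X → ℝ) (M : ℝ) :
    Set (Measure X) :=
  {μ | IsProbabilityMeasure μ ∧ μ Kᶜ = 0 ∧ (∀ i, Integrable (g i) μ ∧ ∫ x, g i x ∂μ = b i) ∧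
    Integrable V μ ∧ ∫ x, V x ∂μ ≤ M}

theorem atomicMeasures_mono (K : Set X) : Monotone (atomicMeasures K) :=
  fun _ _ hB _ ⟨J, ω, pts, hJ, h⟩ => ⟨J, ω, pts, hJ.trans hB, h⟩

section WeightedDirac

variable {κ : Type*} [Fintype κ] {w : κ → ℝ} {x : κ → X}

theorem weightedDirac_univ (hw : ∀ j, 0 ≤ w j) :
    weightedDirac w x Set.univ = ENNReal.ofReal (∑ j, w j) := by
  simp [weightedDirac, ENNReal.ofReal_sum_of_nonneg fun j _ => hw j]

variable [MeasurableSingletonClass X]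

theorem integrable_weightedDirac (h : X → ℝ) : Integrable h (weightedDirac w x) :=
  integrable_finsetSum_measure.2 fun _ _ =>
    (integrable_dirac (by simp)).smul_measure ENNReal.ofReal_ne_top

theorem integral_weightedDirac (hw : ∀ j, 0 ≤ w j) (h : X → ℝ) :
    ∫ y, h y ∂(weightedDirac w x) = ∑ j, w j * h (x j) := by
  rw [weightedDirac, ← Measure.sum_fintype, integral_sum_dirac fun _ => ENNReal.ofReal_ne_top]
  simp [hw]

variable {ι : Type*} {K : Set X} {g : ι → X → ℝ} {b : ι → ℝ} {V : X → ℝ} {M : ℝ}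

theorem weightedDirac_mem_gmpFeasible_iff (hw : ∀ j, 0 ≤ w j) (hx : ∀ j, x j ∈ K) :
    weightedDirac w x ∈ gmpFeasible K g b V M ↔
      ∑ j, w j = 1 ∧ (∀ i, ∑ j, w j * g i (x j) = b i) ∧ ∑ j, w j * V (x j) ≤ M := by
  have hK : weightedDirac w x Kᶜ = 0 := by simp [weightedDirac, hx]
  simp only [gmpFeasible, Set.mem_ofPred_eq, isProbabilityMeasure_iff, weightedDirac_univ hw, hK,
    integrable_weightedDirac, integral_weightedDirac hw, ENNReal.ofReal_eq_one, true_and]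

theorem exists_mem_atomicMeasures_integral_eq [Fintype ι] {μ : Measure X}
    (hμ : μ ∈ gmpFeasible K g b V M) {φ : X → ℝ} (hφ : Integrable φ μ) :
    ∃ ν ∈ gmpFeasible K g b V M,
      ν ∈ atomicMeasures K (Fintype.card ι + 3) ∧ ∫ x, φ x ∂ν = ∫ x, φ x ∂μ := by
  obtain ⟨_, hμK, hg, hV, hVM⟩ := hμ
  have hgi := Integrable.of_eval fun i => (hg i).1
  obtain ⟨J, hJ, w, x, hw, hx, hw_sum, hG⟩ := exists_sum_smul_eq_integral
    (G := fun x => (φ x, V x, fun i => g i x)) (hφ.prodMk (hV.prodMk hgi)) hμK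
  rw [integral_pair hφ (hV.prodMk hgi), integral_pair hV hgi] at hG
  simp only [Prod.ext_iff, Prod.fst_sum, Prod.snd_sum, Prod.smul_mk, smul_eq_mul] at hG
  obtain ⟨hGφ, hGV, hGg⟩ := hG
  have hw₀ := fun j => (hw j).le
  refine ⟨weightedDirac w x, (weightedDirac_mem_gmpFeasible_iff hw₀ hx).2
    ⟨hw_sum, fun i => ?_, hGV.trans_le hVM⟩, ⟨J, w, x, hJ.trans_eq ?_, hw, hx, rfl⟩, ?_⟩
  · rw [← (hg i).2, ← eval_integral fun i => (hg i).1, ← hGg]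
    simp
  · simp; ring
  · rw [integral_weightedDirac hw₀, hGφ]

end WeightedDirac

theorem isCompact_image_of_ultrafilter {α Y : Type*} [TopologicalSpace Y] {s : Set α} {F : α → Y}
    (h : ∀ U : Ultrafilter α, s ∈ U → ∃ a ∈ s, Tendsto F U (𝓝 (F a))) : IsCompact (F '' s) := by
  refine isCompact_iff_ultrafilter_le_nhds'.2 fun U hU => ?_
  obtain ⟨a, ha, hlim⟩ := h _ (Ultrafilter.ofComapInfPrincipal_mem hU)
  refine ⟨F a, ⟨a, ha, rfl⟩, ?_⟩
  rwa [Tendsto, ← Ultrafilter.coe_map, Ultrafilter.ofComapInfPrincipal_eq_of_map] at hlim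

variable [TopologicalSpace X] [MeasurableSingletonClass X]
  {ι : Type*} {K : Set X} {g : ι → X → ℝ} {b : ι → ℝ} {V φ : X → ℝ} {M : ℝ}

theorem isCompact_image_integral_weightedDirac {κ : Type*} [Fintype κ] (hK : IsClosed K)
    (hV : ContinuousOn V K) (hV₀ : ∀ x ∈ K, 0 ≤ V x) (hone : IsSubordinate K V 1)
    (hg : ∀ i, IsSubordinate K V (g i)) (hφ : IsSubordinate K V φ) :
    IsCompact ((fun c : (κ → ℝ) × (κ → X) => ∫ x, φ x ∂(weightedDirac c.1 c.2)) ''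
      {c | (∀ j, 0 ≤ c.1 j) ∧ (∀ j, c.2 j ∈ K) ∧
        weightedDirac c.1 c.2 ∈ gmpFeasible K g b V M}) := by
  refine isCompact_image_of_ultrafilter fun U hU => ?_
  have hfeas : ∀ᶠ c : (κ → ℝ) × (κ → X) in U, (∀ j, 0 ≤ c.1 j) ∧ (∀ j, c.2 j ∈ K) ∧
      ∑ j, c.1 j = 1 ∧ (∀ i, ∑ j, c.1 j * g i (c.2 j) = b i) ∧ ∑ j, c.1 j * V (c.2 j) ≤ M :=
    mem_of_superset hU fun c ⟨hw, hx, hc⟩ =>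
      ⟨hw, hx, (weightedDirac_mem_gmpFeasible_iff hw hx).1 hc⟩
  obtain ⟨w, x, hw, hx, hVM, hlim⟩ := exists_tendsto_weighted_atoms (w := Prod.fst) (x := Prod.snd)
    hK hV hV₀ (hfeas.mono fun c hc => ⟨hc.1, hc.2.2.1⟩) (hfeas.mono fun c hc => hc.2.1)
    (hfeas.mono fun c hc => hc.2.2.2.2)
  have hw_sum : ∑ j, w j = 1 := by
    refine tendsto_nhds_unique (by simpa using hlim 1 hone) (tendsto_const_nhds.congr' ?_)
    exact hfeas.mono fun c hc => hc.2.2.1.symm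
  have hw_moment : ∀ i, ∑ j, w j * g i (x j) = b i := fun i =>
    tendsto_nhds_unique (hlim _ (hg i)) <|
      tendsto_const_nhds.congr' (hfeas.mono fun c hc => (hc.2.2.2.1 i).symm)
  refine ⟨(w, x), ⟨hw, hx, (weightedDirac_mem_gmpFeasible_iff hw hx).2
    ⟨hw_sum, hw_moment, hVM⟩⟩, ?_⟩
  simp only [integral_weightedDirac hw]
  exact (hlim φ hφ).congr' (hfeas.mono fun c hc => (integral_weightedDirac hc.1 φ).symm)

variable [OpensMeasurableSpace X]

theorem isCompact_image_integral_gmpFeasible [Finite ι] (hK : IsClosed K) (hV : ContinuousOn V K)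
    (hV₀ : ∀ x ∈ K, 0 ≤ V x) (hone : IsSubordinate K V 1)
    (hg : ∀ i, IsSubordinate K V (g i)) (hφ : IsSubordinate K V φ) :
    IsCompact ((fun μ => ∫ x, φ x ∂μ) '' gmpFeasible K g b V M) := by
  cases nonempty_fintype ι
  convert (Set.finite_Iic (Fintype.card ι + 3)).isCompact_biUnion fun J _ =>
    isCompact_image_integral_weightedDirac (κ := Fin J) (b := b) (M := M) hK hV hV₀ hone hg hφ
  refine Set.Subset.antisymm ?_ (Set.iUnion₂_subset ?_)
  · rintro _ ⟨μ, hμ, rfl⟩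
    have := hμ.1
    obtain ⟨_, hν, ⟨J, w, x, hJ, hw, hx, rfl⟩, hνφ⟩ :=
      exists_mem_atomicMeasures_integral_eq hμ (hφ.integrable hK hμ.2.1 hμ.2.2.2.1)
    exact Set.mem_biUnion hJ ⟨(w, x), ⟨fun j => (hw j).le, hx, hν⟩, hνφ⟩
  · rintro J - _ ⟨c, ⟨-, -, hc⟩, rfl⟩
    exact ⟨_, hc, rfl⟩

theorem gmp_attained_by_atomic_measure_general [Fintype ι] (hK : IsClosed K)
    (hV : ContinuousOn V K) (hV₀ : ∀ x ∈ K, 0 ≤ V x) (hone : IsSubordinate K V 1)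
    (hg : ∀ i, IsSubordinate K V (g i)) (hφ : IsSubordinate K V φ)
    (hne : (gmpFeasible K g b V M).Nonempty) :
    (∃ μ ∈ gmpFeasible K g b V M,
      IsLeast ((fun ν => ∫ x, φ x ∂ν) '' gmpFeasible K g b V M) (∫ x, φ x ∂μ) ∧
        μ ∈ atomicMeasures K (Fintype.card ι + 3)) ∧
    (∃ μ ∈ gmpFeasible K g b V M,
      IsGreatest ((fun ν => ∫ x, φ x ∂ν) '' gmpFeasible K g b V M) (∫ x, φ x ∂μ) ∧
        μ ∈ atomicMeasures K (Fintype.card ι + 3)) := by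
  have hcompact := isCompact_image_integral_gmpFeasible (b := b) (M := M) hK hV hV₀ hone hg hφ
  have hatomic : ∀ v ∈ (fun ν => ∫ x, φ x ∂ν) '' gmpFeasible K g b V M,
      ∃ μ ∈ gmpFeasible K g b V M, μ ∈ atomicMeasures K (Fintype.card ι + 3) ∧
        ∫ x, φ x ∂μ = v := by
    rintro _ ⟨μ, hμ, rfl⟩
    have := hμ.1
    exact exists_mem_atomicMeasures_integral_eq hμ (hφ.integrable hK hμ.2.1 hμ.2.2.2.1)
  obtain ⟨_, hleast⟩ := hcompact.exists_isLeast (hne.image _)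
  obtain ⟨_, hgreatest⟩ := hcompact.exists_isGreatest (hne.image _)
  obtain ⟨μ, hμ, hμ_atomic, rfl⟩ := hatomic _ hleast.1
  obtain ⟨ν, hν, hν_atomic, rfl⟩ := hatomic _ hgreatest.1
  exact ⟨⟨μ, hμ, hleast, hμ_atomic⟩, ν, hν, hgreatest, hν_atomic⟩

end MomentProblem

section Growth

theorem IsSubordinate.of_abs_le_pow {E : Type*} [NormedAddCommGroup E] [ProperSpace E]
    {K : Set E} {g : E → ℝ} {e d : ℕ} {C : ℝ} (hed : e < d) (hgc : ContinuousOn g K)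
    (hg : ∀ x ∈ K, |g x| ≤ C * (1 + ‖x‖ ^ e)) : IsSubordinate K (fun x => ‖x‖ ^ d) g where
  continuousOn := hgc
  isLittleO := by
    have hpow : ∀ a < d, (fun x : E => ‖x‖ ^ a) =o[cocompact E] fun x => ‖x‖ ^ d := fun a ha =>
      (isLittleO_pow_pow_atTop_of_lt ha).comp_tendsto tendsto_norm_cocompact_atTop
    have hsum : (fun x : E => 1 + ‖x‖ ^ e) =o[cocompact E] fun x => ‖x‖ ^ d := by
      simpa using (hpow 0 (by lia)).add (hpow e hed)
    have hbig : g =O[𝓟 K] fun x => 1 + ‖x‖ ^ e := by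
      refine isBigO_principal.2 ⟨C, fun x hx => ?_⟩
      rw [Real.norm_of_nonneg (by positivity : 0 ≤ 1 + ‖x‖ ^ e)]
      exact hg x hx
    exact (hbig.mono inf_le_right).trans_isLittleO (hsum.mono inf_le_left)

theorem IsSubordinate.one_norm_pow {E : Type*} [NormedAddCommGroup E] [ProperSpace E] (K : Set E)
    {d : ℕ} (hd : 0 < d) : IsSubordinate K (fun x => ‖x‖ ^ d) 1 :=
  .of_abs_le_pow (C := 1) hd continuousOn_const (by simp)

variable {σ : Type*} [Fintype σ]

theorem isSubordinate_call (K : Set (EuclideanSpace ℝ σ)) {d : ℕ} (hd : 1 < d) (i : σ) (k : ℝ) :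
    IsSubordinate K (fun x => ‖x‖ ^ d) fun x => max 0 (x i - k) := by
  refine .of_abs_le_pow (C := 1 + |k|) hd (by fun_prop) fun x _ => ?_
  rw [abs_of_nonneg (le_max_left _ _), pow_one]
  have hxi : x i ≤ ‖x‖ := (le_abs_self _).trans (PiLp.norm_apply_le x i)
  refine max_le (by positivity) ?_
  nlinarith [neg_abs_le k, mul_nonneg (abs_nonneg k) (norm_nonneg x)]

theorem abs_prod_pow_le_norm_pow (s : σ → ℕ) (x : EuclideanSpace ℝ σ) :
    |∏ i, x i ^ s i| ≤ ‖x‖ ^ ∑ i, s i := by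
  rw [Finset.abs_prod, ← Finset.prod_pow_eq_pow_sum]
  refine Finset.prod_le_prod (fun i _ => abs_nonneg _) fun i _ => ?_
  rw [abs_pow]
  exact pow_le_pow_left₀ (abs_nonneg _) (PiLp.norm_apply_le x i) _

theorem pow_le_one_add_pow {t : ℝ} (ht : 0 ≤ t) {a b : ℕ} (hab : a ≤ b) : t ^ a ≤ 1 + t ^ b := by
  rcases le_total t 1 with h | h
  · exact (pow_le_one₀ ht h).trans (le_add_of_nonneg_right (pow_nonneg ht b))
  · exact (pow_le_pow_right₀ h hab).trans (le_add_of_nonneg_left zero_le_one)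

theorem abs_eval_le_mul_one_add_norm_pow (f : MvPolynomial σ ℝ) (x : EuclideanSpace ℝ σ) :
    |MvPolynomial.eval (fun i => x i) f| ≤
      (∑ s ∈ f.support, |f.coeff s|) * (1 + ‖x‖ ^ f.totalDegree) := by
  rw [MvPolynomial.eval_eq', Finset.sum_mul]
  refine (Finset.abs_sum_le_sum_abs _ _).trans (Finset.sum_le_sum fun s hs => ?_)
  have hdeg : ∑ i, s i ≤ f.totalDegree := by
    simpa [Finsupp.sum_fintype] using MvPolynomial.le_totalDegree hs
  rw [abs_mul]
  gcongr
  exact (abs_prod_pow_le_norm_pow s x).trans (pow_le_one_add_pow (norm_nonneg x) hdeg)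

theorem isSubordinate_eval (K : Set (EuclideanSpace ℝ σ)) {d : ℕ} {f : MvPolynomial σ ℝ}
    (hf : f.totalDegree < d) :
    IsSubordinate K (fun x => ‖x‖ ^ d) fun x => MvPolynomial.eval (fun i => x i) f :=
  .of_abs_le_pow hf ((MvPolynomial.continuous_eval f).comp (by fun_prop)).continuousOn
    fun x _ => abs_eval_le_mul_one_add_norm_pow f x

end Growth

section OptionPricing

variable {σ : Type*} {N : σ → Type*} {τ : Type*}

/-- The test functions of the option-pricing problem: the call payoffs `max 0 (xᵢ - kᵢⱼ)` and the
polynomials `f_ℓ`. -/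
noncomputable def optionTest (k : (i : σ) → N i → ℝ) (f : τ → MvPolynomial σ ℝ) :
    (Σ i, N i) ⊕ τ → EuclideanSpace ℝ σ → ℝ :=
  Sum.elim (fun ij x => max 0 (x ij.1 - k ij.1 ij.2))
    fun ℓ x => MvPolynomial.eval (fun i => x i) (f ℓ)

theorem gmpFeasible_optionTest (K : Set (EuclideanSpace ℝ σ)) (k q : (i : σ) → N i → ℝ)
    (f : τ → MvPolynomial σ ℝ) (p : τ → ℝ) (V : EuclideanSpace ℝ σ → ℝ) (M : ℝ) :
    gmpFeasible K (optionTest k f) (Sum.elim (fun ij => q ij.1 ij.2) p) V M =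
      {μ | IsProbabilityMeasure μ ∧ μ Kᶜ = 0 ∧
        (∀ i j, Integrable (fun x => max 0 (x i - k i j)) μ ∧
          ∫ x, max 0 (x i - k i j) ∂μ = q i j) ∧
        (∀ ℓ, Integrable (fun x => MvPolynomial.eval (fun i => x i) (f ℓ)) μ ∧
          ∫ x, MvPolynomial.eval (fun i => x i) (f ℓ) ∂μ = p ℓ) ∧
        Integrable V μ ∧ ∫ x, V x ∂μ ≤ M} := by
  simp [gmpFeasible, optionTest, Sigma.forall, and_assoc]

theorem isSubordinate_optionTest [Fintype σ] (K : Set (EuclideanSpace ℝ σ)) {d : ℕ} (hd : 1 < d)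
    (k : (i : σ) → N i → ℝ) {f : τ → MvPolynomial σ ℝ} (hf : ∀ ℓ, (f ℓ).totalDegree < d) :
    ∀ c, IsSubordinate K (fun x => ‖x‖ ^ d) (optionTest k f c)
  | .inl ij => isSubordinate_call K hd ij.1 (k ij.1 ij.2)
  | .inr ℓ => isSubordinate_eval K (hf ℓ)

theorem isClosed_setOf_forall_nonneg : IsClosed {x : EuclideanSpace ℝ σ | ∀ i, 0 ≤ x i} := by
  simp only [Set.ofPred_forall]
  exact isClosed_iInter fun i => isClosed_le continuous_const (by fun_prop)

end OptionPricing

/-- Corollary 1: if the option-pricing GMP is feasible, its infimum (resp. supremum) is attained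
by a finitely atomic measure with at most `n·(∑ᵢ Nᵢ) + m + 3` atoms. -/
theorem gmp_attained_by_atomic_measure
    (n m : ℕ) (hn : 1 ≤ n)
    (N : Fin n → ℕ) (k : (i : Fin n) → Fin (N i) → ℝ) (hk : ∀ i j, 0 ≤ k i j)
    (q : (i : Fin n) → Fin (N i) → ℝ)
    (f : Fin m → MvPolynomial (Fin n) ℝ) (p : Fin m → ℝ)
    (M : ℝ) (hM : 0 < M)
    (d : ℕ) (hdeven : Even d) (hd2 : 2 ≤ d) (hdf : ∀ ℓ, (f ℓ).totalDegree < d)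
    (φ : EuclideanSpace ℝ (Fin n) → ℝ) (hφc : Continuous φ)
    (C₀ : ℝ) (hC₀ : 0 ≤ C₀)
    (hφ : ∀ x : EuclideanSpace ℝ (Fin n), (∀ i, 0 ≤ x i) →
        0 ≤ φ x ∧ φ x ≤ C₀ * (1 + ‖x‖ ^ (d - 1)))
    (F : Set (Measure (EuclideanSpace ℝ (Fin n))))
    (hF : F = {μ | IsProbabilityMeasure μ ∧
        μ {x | ¬ ∀ i, 0 ≤ x i} = 0 ∧
        (∀ i j, Integrable (fun x => max 0 (x i - k i j)) μ ∧
          ∫ x, max 0 (x i - k i j) ∂μ = q i j) ∧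
        (∀ ℓ, Integrable (fun x => MvPolynomial.eval (fun i => x i) (f ℓ)) μ ∧
          ∫ x, MvPolynomial.eval (fun i => x i) (f ℓ) ∂μ = p ℓ) ∧
        Integrable (fun x => ‖x‖ ^ d) μ ∧ ∫ x, ‖x‖ ^ d ∂μ ≤ M})
    (hne : F.Nonempty) :
    (∃ μ ∈ F, ∫ x, φ x ∂μ = sInf ((fun ν => ∫ x, φ x ∂ν) '' F) ∧
      ∃ (J : ℕ) (ω : Fin J → ℝ) (pts : Fin J → EuclideanSpace ℝ (Fin n)),
        J ≤ n * (∑ i, N i) + m + 3 ∧ (∀ j, 0 < ω j) ∧ (∀ j i, 0 ≤ pts j i) ∧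
        μ = ∑ j, ENNReal.ofReal (ω j) • Measure.dirac (pts j)) ∧
    (∃ μ ∈ F, ∫ x, φ x ∂μ = sSup ((fun ν => ∫ x, φ x ∂ν) '' F) ∧
      ∃ (J : ℕ) (ω : Fin J → ℝ) (pts : Fin J → EuclideanSpace ℝ (Fin n)),
        J ≤ n * (∑ i, N i) + m + 3 ∧ (∀ j, 0 < ω j) ∧ (∀ j i, 0 ≤ pts j i) ∧
        μ = ∑ j, ENNReal.ofReal (ω j) • Measure.dirac (pts j)) := by
  have hB : Fintype.card ((Σ i, Fin (N i)) ⊕ Fin m) + 3 ≤ n * (∑ i, N i) + m + 3 := by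
    simpa using Nat.le_mul_of_pos_left _ hn
  have hφ_sub : IsSubordinate {x | ∀ i, 0 ≤ x i} (fun x => ‖x‖ ^ d) φ :=
    .of_abs_le_pow (by lia) hφc.continuousOn fun x hx =>
      (abs_of_nonneg (hφ x hx).1).trans_le (hφ x hx).2
  obtain rfl := hF.trans (gmpFeasible_optionTest {x | ∀ i, 0 ≤ x i} k q f p (‖·‖ ^ d) M).symm
  exact (gmp_attained_by_atomic_measure_general isClosed_setOf_forall_nonneg (by fun_prop)
    (fun x _ => by positivity) (.one_norm_pow _ (by lia)) (isSubordinate_optionTest _ hd2 k hdf)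
    hφ_sub hne).imp
    (fun ⟨μ, hμ, hleast, hatoms⟩ => ⟨μ, hμ, hleast.csInf_eq.symm, atomicMeasures_mono _ hB hatoms⟩)
    (fun ⟨μ, hμ, hgreatest, hatoms⟩ =>
      ⟨μ, hμ, hgreatest.csSup_eq.symm, atomicMeasures_mono _ hB hatoms⟩)
end
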